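/- For $\varepsilon > 0$ and $n \ge 2$, let $\mathcal{C}_n(\varepsilon)$ denote the set of partitions of the vertex set of the $n\times n$ grid graph into $n$ parts, each of size $n$ and each inducing a connected subgraph, whose cut score is at most $\varepsilon n^2$. Then $|\mathcal{C}_n(\varepsilon)| \le \sum_{j=n-1}^{\lfloor \varepsilon n^2 \rfloor} \binom{2n(n-1)}{j}$. -/

import Mathlib

open Filter

/-- The `n × n` grid graph: vertices are pairs in `Fin n × Fin n`, adjacent iff they agree
in one coordinate and differ by exactly 1 in the other. -/
def gridGraph (n : ℕ) : SimpleGraph (Fin n × Fin n) :=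
  SimpleGraph.fromRel (fun a b =>
    (a.1 = b.1 ∧ (a.2 : ℕ) + 1 = (b.2 : ℕ)) ∨ (a.2 = b.2 ∧ (a.1 : ℕ) + 1 = (b.1 : ℕ)))

/-- `P` is a partition of the vertex set of the `n × n` grid graph into `n` parts,
each of size `n` and each inducing a connected subgraph. -/
def IsGridPartition (n : ℕ) (P : Finset (Finset (Fin n × Fin n))) : Prop :=
  P.card = n ∧
  (∀ s ∈ P, s.card = n) ∧
  (∀ s ∈ P, ((gridGraph n).induce (↑s : Set (Fin n × Fin n))).Connected) ∧
  (∀ v : Fin n × Fin n, ∃! s, s ∈ P ∧ v ∈ s)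

/-- The number of partitions of the `n × n` grid graph into `n` connected parts of size `n`. -/
noncomputable def gridPartitionCount (n : ℕ) : ℕ :=
  Nat.card {P : Finset (Finset (Fin n × Fin n)) // IsGridPartition n P}

/-- The cut score of a partition: the number of edges of the grid graph whose two endpoints
lie in different parts. -/
noncomputable def cutScore (n : ℕ) (P : Finset (Finset (Fin n × Fin n))) : ℕ :=
  {e ∈ (gridGraph n).edgeSet | ¬ ∃ s ∈ P, ∀ v ∈ e, v ∈ s}.ncard

/-!
Deleting the cut edges of a partition into connected parts leaves exactly the parts as connected
components, so the partition is determined by its set of cut edges. Contracting the parts of a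
connected graph gives a connected graph whose edges come from cut edges, so a partition into `k`
parts cuts at least `k - 1` edges. It remains to count the sets of edges of admissible size; the
grid has `2 * n * (n - 1)` edges because it is a box product of two paths.
-/

open SimpleGraph

variable {α β V W : Type*}

lemma ncard_setOf_subset_ncard_mem_le {E : Set α} (hE : E.Finite) (J : Finset ℕ) :
    {F | F ⊆ E ∧ F.ncard ∈ J}.ncard ≤ ∑ j ∈ J, E.ncard.choose j := by
  have hUnion : {F | F ⊆ E ∧ F.ncard ∈ J} = ⋃ j ∈ J, {F ⊆ E | F.ncard = j} := by
    ext F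
    simp
  rw [hUnion]
  refine (Finset.set_ncard_biUnion_le J _).trans_eq (Finset.sum_congr rfl fun j _ => ?_)
  exact Set.ncard_powerset_ncard hE j

section Contraction

variable {G : SimpleGraph V} {f : V → W}

lemma connected_map_of_surjective (hG : G.Connected) (hf : f.Surjective) :
    (G.map f).Connected := by
  have := hG.nonempty.map f
  refine ⟨hf.forall₂.2 fun u v => ?_⟩
  have huv := hG.preconnected u v
  rw [reachable_iff_reflTransGen] at huv ⊢
  refine huv.lift' f fun a b hab => ?_
  by_cases hne : f a = f b
  · rw [Function.onFun_apply, hne]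
  · exact .single (map_adj_apply' hab hne)

lemma edgeSet_map_subset_image (G : SimpleGraph V) (f : V → W) :
    (G.map f).edgeSet ⊆ Sym2.map f '' {e ∈ G.edgeSet | ¬(e.map f).IsDiag} := by
  refine Sym2.ind fun a b => ?_
  rintro ⟨hne, u, v, huv, rfl, rfl⟩
  exact ⟨s(u, v), ⟨huv, by simpa using hne⟩, rfl⟩

lemma card_le_ncard_edgeSet_not_isDiag_map_add_one [Finite V] (hG : G.Connected)
    (hf : f.Surjective) :
    Nat.card W ≤ {e ∈ G.edgeSet | ¬(e.map f).IsDiag}.ncard + 1 := by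
  have := Finite.of_surjective f hf
  calc Nat.card W ≤ (G.map f).edgeSet.ncard + 1 :=
        (connected_map_of_surjective hG hf).card_vert_le_card_edgeSet_add_one
    _ ≤ (Sym2.map f '' {e ∈ G.edgeSet | ¬(e.map f).IsDiag}).ncard + 1 := by
        gcongr
        · exact Set.toFinite _
        · exact edgeSet_map_subset_image G f
    _ ≤ {e ∈ G.edgeSet | ¬(e.map f).IsDiag}.ncard + 1 := by
        gcongr
        exact Set.ncard_image_le (Set.toFinite _)

end Contraction

/-- A partition of the vertex set of `G` into parts inducing connected subgraphs. Connected graphs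
being nonempty, no part is empty. -/
structure IsConnectedPartition (G : SimpleGraph V) (P : Finset (Finset V)) : Prop where
  connected : ∀ s ∈ P, (G.induce (s : Set V)).Connected
  existsUnique_mem : ∀ v, ∃! s, s ∈ P ∧ v ∈ s

/-- The edges of `G` whose endpoints lie in no common part of `P`; their number is the cut score
of `P`. -/
def cutEdges (G : SimpleGraph V) (P : Finset (Finset V)) : Set (Sym2 V) :=
  {e ∈ G.edgeSet | ¬∃ s ∈ P, ∀ v ∈ e, v ∈ s}

section ConnectedPartition

variable {G : SimpleGraph V} {P Q : Finset (Finset V)} {s : Finset V} {u v : V}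

lemma deleteEdges_cutEdges_adj :
    (G.deleteEdges (cutEdges G P)).Adj u v ↔ G.Adj u v ∧ ∃ s ∈ P, u ∈ s ∧ v ∈ s := by
  simp only [deleteEdges_adj, cutEdges, Set.mem_sep_iff, mem_edgeSet, Sym2.ball,
    not_and_not_right]
  exact and_congr_right forall_prop_of_true

namespace IsConnectedPartition

lemma eq_of_mem (hP : IsConnectedPartition G P) {t : Finset V} (hs : s ∈ P) (ht : t ∈ P)
    (hvs : v ∈ s) (hvt : v ∈ t) : s = t :=
  (hP.existsUnique_mem v).unique ⟨hs, hvs⟩ ⟨ht, hvt⟩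

lemma reachable_deleteEdges_cutEdges_iff (hP : IsConnectedPartition G P) (hs : s ∈ P)
    (hu : u ∈ s) : (G.deleteEdges (cutEdges G P)).Reachable u v ↔ v ∈ s := by
  constructor
  · rw [reachable_iff_reflTransGen]
    intro huv
    induction huv with
    | refl => exact hu
    | tail _ hab ha =>
      obtain ⟨-, t, ht, hat, hbt⟩ := deleteEdges_cutEdges_adj.1 hab
      rwa [hP.eq_of_mem hs ht ha hat]
  · intro hv
    let inclusion : G.induce (s : Set V) →g G.deleteEdges (cutEdges G P) :=
      { toFun := Subtype.val
        map_rel' := fun {a b} hab => deleteEdges_cutEdges_adj.2 ⟨hab, s, hs, a.2, b.2⟩ }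
    exact ((hP.connected s hs).preconnected ⟨u, hu⟩ ⟨v, hv⟩).map inclusion

lemma subset_of_cutEdges_eq (hP : IsConnectedPartition G P) (hQ : IsConnectedPartition G Q)
    (hPQ : cutEdges G P = cutEdges G Q) : P ⊆ Q := by
  intro s hs
  obtain ⟨⟨v, hvs⟩⟩ := (hP.connected s hs).nonempty
  obtain ⟨t, ⟨ht, hvt⟩, -⟩ := hQ.existsUnique_mem v
  suffices s = t from this ▸ ht
  ext u
  rw [← hP.reachable_deleteEdges_cutEdges_iff hs hvs, hPQ,
    hQ.reachable_deleteEdges_cutEdges_iff ht hvt]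

lemma card_le_ncard_cutEdges_add_one [Finite V] (hP : IsConnectedPartition G P)
    (hG : G.Connected) : P.card ≤ (cutEdges G P).ncard + 1 := by
  choose part hpart _ using hP.existsUnique_mem
  let f (v : V) : P := ⟨part v, (hpart v).1⟩
  have hf_eq {v : V} {s : P} (hv : v ∈ s.1) : f v = s :=
    Subtype.ext (hP.eq_of_mem (hpart v).1 s.2 (hpart v).2 hv)
  have hf : f.Surjective := fun s =>
    let ⟨⟨v, hv⟩⟩ := (hP.connected s s.2).nonempty
    ⟨v, hf_eq hv⟩
  have hcut : {e ∈ G.edgeSet | ¬(e.map f).IsDiag} ⊆ cutEdges G P := by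
    rintro e ⟨he, hdiag⟩
    refine ⟨he, fun ⟨s, hs, hes⟩ => hdiag ?_⟩
    induction e with
    | _ u v =>
      rw [Sym2.ball] at hes
      exact (hf_eq (s := ⟨s, hs⟩) hes.1).trans (hf_eq hes.2).symm
  calc P.card = Nat.card P := by simp
    _ ≤ {e ∈ G.edgeSet | ¬(e.map f).IsDiag}.ncard + 1 :=
        card_le_ncard_edgeSet_not_isDiag_map_add_one hG hf
    _ ≤ (cutEdges G P).ncard + 1 := by
        gcongr
        exact Set.toFinite _

end IsConnectedPartition

lemma injOn_cutEdges (G : SimpleGraph V) :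
    Set.InjOn (cutEdges G) {P | IsConnectedPartition G P} := fun _ hP _ hQ hPQ =>
  (hP.subset_of_cutEdges_eq hQ hPQ).antisymm (hQ.subset_of_cutEdges_eq hP hPQ.symm)

theorem compact_count_le_binomial_sum_general [Finite V] (hG : G.Connected) (k c : ℕ) :
    {P | IsConnectedPartition G P ∧ P.card = k ∧ (cutEdges G P).ncard ≤ c}.ncard ≤
      ∑ j ∈ Finset.Icc (k - 1) c, G.edgeSet.ncard.choose j := by
  refine le_trans ?_ (ncard_setOf_subset_ncard_mem_le G.edgeSet.toFinite (Finset.Icc (k - 1) c))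
  refine Set.ncard_le_ncard_of_injOn (cutEdges G) ?_
    ((injOn_cutEdges G).mono fun _ hP => hP.1) (Set.toFinite _)
  rintro P ⟨hP, rfl, hcut⟩
  have hcard := hP.card_le_ncard_cutEdges_add_one hG
  exact ⟨Set.sep_subset _ _, Finset.mem_Icc.2 ⟨by omega, hcut⟩⟩

end ConnectedPartition

lemma ncard_edgeSet_boxProd [Finite α] [Finite β] (G : SimpleGraph α) (H : SimpleGraph β) :
    (G □ H).edgeSet.ncard = Nat.card β * G.edgeSet.ncard + Nat.card α * H.edgeSet.ncard := by
  classical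
  have := Fintype.ofFinite α
  have := Fintype.ofFinite β
  simp only [← coe_edgeFinset, Set.ncard_coe_finset, Nat.card_eq_fintype_card]
  refine Nat.eq_of_mul_eq_mul_left two_pos ?_
  calc 2 * (G □ H).edgeFinset.card = ∑ a, ∑ b, (G.degree a + H.degree b) := by
        rw [← sum_degrees_eq_twice_card_edges, Fintype.sum_prod_type]
        simp only [degree_boxProd]
    _ = Fintype.card β * ∑ a, G.degree a + Fintype.card α * ∑ b, H.degree b := by
        simp [Finset.sum_add_distrib, Finset.mul_sum]
    _ = 2 * (Fintype.card β * G.edgeFinset.card + Fintype.card α * H.edgeFinset.card) := by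
        rw [sum_degrees_eq_twice_card_edges, sum_degrees_eq_twice_card_edges]
        ring

lemma edgeSet_pathGraph_succ (m : ℕ) :
    (pathGraph (m + 1)).edgeSet = Set.range fun i : Fin m => s(i.castSucc, i.succ) := by
  ext e
  induction e with
  | _ a b =>
    simp only [mem_edgeSet, pathGraph_adj, Set.mem_range, Sym2.eq_iff, Fin.ext_iff,
      Fin.val_castSucc, Fin.val_succ]
    constructor
    · rintro (hab | hba)
      · exact ⟨⟨a, by omega⟩, .inl ⟨rfl, hab⟩⟩
      · exact ⟨⟨b, by omega⟩, .inr ⟨rfl, hba⟩⟩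
    · rintro ⟨i, ⟨hia, hib⟩ | ⟨hib, hia⟩⟩ <;> omega

lemma ncard_edgeSet_pathGraph (n : ℕ) : (pathGraph n).edgeSet.ncard = n - 1 := by
  cases n with
  | zero => simp [Set.eq_empty_of_isEmpty]
  | succ m =>
    have hinj : Function.Injective fun i : Fin m => s(i.castSucc, i.succ) := by
      intro i j hij
      simp only [Sym2.eq_iff, Fin.ext_iff, Fin.val_castSucc, Fin.val_succ] at hij
      omega
    rw [edgeSet_pathGraph_succ, ← Set.image_univ, Set.ncard_image_of_injective _ hinj]
    simp [Set.ncard_univ]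

lemma gridGraph_eq_boxProd (n : ℕ) : gridGraph n = pathGraph n □ pathGraph n := by
  ext ⟨a, b⟩ ⟨c, d⟩
  simp only [gridGraph, fromRel_adj, boxProd_adj, pathGraph_adj, ne_eq, Prod.mk.injEq, Fin.ext_iff]
  omega

lemma gridGraph_connected {n : ℕ} (hn : n ≠ 0) : (gridGraph n).Connected := by
  obtain ⟨m, rfl⟩ := Nat.exists_eq_succ_of_ne_zero hn
  rw [gridGraph_eq_boxProd]
  exact (pathGraph_connected m).boxProd (pathGraph_connected m)

lemma ncard_edgeSet_gridGraph (n : ℕ) : (gridGraph n).edgeSet.ncard = 2 * n * (n - 1) := by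
  rw [gridGraph_eq_boxProd, ncard_edgeSet_boxProd, ncard_edgeSet_pathGraph, Nat.card_fin]
  ring

lemma IsGridPartition.isConnectedPartition {n : ℕ} {P : Finset (Finset (Fin n × Fin n))}
    (hP : IsGridPartition n P) : IsConnectedPartition (gridGraph n) P :=
  ⟨hP.2.2.1, hP.2.2.2⟩

theorem compact_count_le_binomial_sum (ε : ℝ) (hε : 0 < ε) (n : ℕ) (hn : 2 ≤ n) :
    Nat.card {P : Finset (Finset (Fin n × Fin n)) //
        IsGridPartition n P ∧ (cutScore n P : ℝ) ≤ ε * (n : ℝ) ^ 2} ≤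
      ∑ j ∈ Finset.Icc (n - 1) ⌊ε * (n : ℝ) ^ 2⌋₊, (2 * n * (n - 1)).choose j := by
  rw [← ncard_edgeSet_gridGraph]
  refine (Set.ncard_le_ncard ?_ (Set.toFinite _)).trans
    (compact_count_le_binomial_sum_general (gridGraph_connected (by omega)) n _)
  exact fun P ⟨hP, hcut⟩ => ⟨hP.isConnectedPartition, hP.1, Nat.le_floor hcut⟩
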